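/- Let d/(d+2) < α < 1 and let f be a probability density function on ℝ^d with zero mean (∫_{ℝ^d} x·f(x) dx = 0), positive definite covariance matrix S = ∫_{ℝ^d} x·xᵀ·f(x) dx, and ∫_{ℝ^d} f(x)^α dx < ∞. Then the Rényi entropy of order α of f satisfies (1/(1−α))·ln(∫_{ℝ^d} f(x)^α dx) ≤ C_d(α) + (1/2)·ln(det S), where C_d(α) = (d/2)·ln(π·(α(d+2)−d)/(1−α)) − (α/(1−α))·ln((α(d+2)−d)/(2α)) − ln( Γ(α/(1−α)) / Γ((α(d+2)−d)/(2(1−α))) ). -/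

import Mathlib

open MeasureTheory Real Matrix

/-!
For every positive definite `A`, Hölder's inequality applied to
`f ^ α = ((1 + xᵀAx) f) ^ α * ((1 + xᵀAx) ^ (-α / (1 - α))) ^ (1 - α)` bounds `∫ f ^ α` by
`(1 + tr (A S)) ^ α * (∫ (1 + xᵀAx) ^ (-α / (1 - α))) ^ (1 - α)`. The second integral is the
normalising constant of a multivariate Student distribution: a linear substitution reduces it to
`A = 1`, and writing `(1 + ‖v‖²) ^ (-p)` as a Gamma mixture of the Gaussians `exp (-t ‖v‖²)` then
evaluates it. Among the multiples of `S⁻¹`, the bound is smallest at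
`A = (1 - α) / (α (d + 2) - d) • S⁻¹`, where it is the claimed one.
-/

section Holder

variable {X : Type*} [MeasurableSpace X] {μ : Measure X}

lemma integrable_rpow_mul_rpow {u v : X → ℝ} (hu : Integrable u μ) (hv : Integrable v μ)
    (hu0 : ∀ x, 0 ≤ u x) (hv0 : ∀ x, 0 ≤ v x) {a b : ℝ} (ha : 0 ≤ a) (hb : 0 ≤ b)
    (hab : a + b = 1) : Integrable (fun x ↦ u x ^ a * v x ^ b) μ := by
  refine ((hu.const_mul a).add (hv.const_mul b)).mono'
    ((hu.aemeasurable.pow_const a).mul (hv.aemeasurable.pow_const b)).aestronglyMeasurable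
    (.of_forall fun x ↦ ?_)
  rw [norm_of_nonneg (mul_nonneg (rpow_nonneg (hu0 x) a) (rpow_nonneg (hv0 x) b))]
  exact geom_mean_le_arith_mean2_weighted ha hb (hu0 x) (hv0 x) hab

lemma integral_rpow_mul_rpow_le {u v : X → ℝ} (hu : Integrable u μ) (hv : Integrable v μ)
    (hu0 : ∀ x, 0 ≤ u x) (hv0 : ∀ x, 0 ≤ v x) {a b : ℝ} (ha : 0 ≤ a) (hb : 0 ≤ b)
    (hab : a + b = 1) :
    ∫ x, u x ^ a * v x ^ b ∂μ ≤ (∫ x, u x ∂μ) ^ a * (∫ x, v x ∂μ) ^ b := by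
  have hU : 0 ≤ ∫ x, u x ∂μ := integral_nonneg hu0
  have hV : 0 ≤ ∫ x, v x ∂μ := integral_nonneg hv0
  have ofReal_rpow_mul_rpow {s t : ℝ} (hs : 0 ≤ s) (ht : 0 ≤ t) :
      ENNReal.ofReal (s ^ a * t ^ b) = ENNReal.ofReal s ^ a * ENNReal.ofReal t ^ b := by
    rw [ENNReal.ofReal_mul (rpow_nonneg hs a), ENNReal.ofReal_rpow_of_nonneg hs ha,
      ENNReal.ofReal_rpow_of_nonneg ht hb]
  rw [← ENNReal.ofReal_le_ofReal_iff (by positivity), ofReal_rpow_mul_rpow hU hV,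
    ofReal_integral_eq_lintegral_ofReal (integrable_rpow_mul_rpow hu hv hu0 hv0 ha hb hab)
      (.of_forall fun x ↦ mul_nonneg (rpow_nonneg (hu0 x) a) (rpow_nonneg (hv0 x) b)),
    ofReal_integral_eq_lintegral_ofReal hu (.of_forall hu0),
    ofReal_integral_eq_lintegral_ofReal hv (.of_forall hv0)]
  simp_rw [fun x ↦ ofReal_rpow_mul_rpow (hu0 x) (hv0 x)]
  exact ENNReal.lintegral_mul_norm_pow_le hu.aemeasurable.ennreal_ofReal
    hv.aemeasurable.ennreal_ofReal ha hb hab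

lemma mul_rpow_mul_rpow_rpow_neg {α y w : ℝ} (hα : α ≠ 1) (hy : 0 ≤ y) (hw : 0 < w) :
    (w * y) ^ α * (w ^ (-(α / (1 - α)))) ^ (1 - α) = y ^ α := by
  have hα' : 1 - α ≠ 0 := sub_ne_zero.2 hα.symm
  rw [← rpow_mul hw.le, show -(α / (1 - α)) * (1 - α) = -α by field_simp, mul_rpow hw.le hy,
    mul_right_comm, ← rpow_add hw, add_neg_cancel, rpow_zero, one_mul]

variable {f w : X → ℝ} {α : ℝ}

lemma integrable_rpow_of_weight (hα0 : 0 ≤ α) (hα1 : α < 1) (hf0 : ∀ x, 0 ≤ f x)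
    (hw0 : ∀ x, 0 < w x) (hwf : Integrable (fun x ↦ w x * f x) μ)
    (hw : Integrable (fun x ↦ w x ^ (-(α / (1 - α)))) μ) :
    Integrable (fun x ↦ f x ^ α) μ := by
  simpa only [mul_rpow_mul_rpow_rpow_neg hα1.ne (hf0 _) (hw0 _)] using
    integrable_rpow_mul_rpow hwf hw (fun x ↦ mul_nonneg (hw0 x).le (hf0 x))
      (fun x ↦ (rpow_pos_of_pos (hw0 x) _).le) hα0 (sub_nonneg.2 hα1.le) (add_sub_cancel α 1)

lemma integral_rpow_le_of_weight (hα0 : 0 ≤ α) (hα1 : α < 1) (hf0 : ∀ x, 0 ≤ f x)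
    (hw0 : ∀ x, 0 < w x) (hwf : Integrable (fun x ↦ w x * f x) μ)
    (hw : Integrable (fun x ↦ w x ^ (-(α / (1 - α)))) μ) :
    ∫ x, f x ^ α ∂μ ≤
      (∫ x, w x * f x ∂μ) ^ α * (∫ x, w x ^ (-(α / (1 - α))) ∂μ) ^ (1 - α) := by
  simpa only [mul_rpow_mul_rpow_rpow_neg hα1.ne (hf0 _) (hw0 _)] using
    integral_rpow_mul_rpow_le hwf hw (fun x ↦ mul_nonneg (hw0 x).le (hf0 x))
      (fun x ↦ (rpow_pos_of_pos (hw0 x) _).le) hα0 (sub_nonneg.2 hα1.le) (add_sub_cancel α 1)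

lemma integral_rpow_pos (hα : α ≠ 0) (hf0 : ∀ x, 0 ≤ f x) (hf : 0 < ∫ x, f x ∂μ)
    (hfα : Integrable (fun x ↦ f x ^ α) μ) : 0 < ∫ x, f x ^ α ∂μ := by
  have hsupp : Function.support (fun x ↦ f x ^ α) = Function.support f := by
    ext x
    simp [rpow_eq_zero (hf0 x) hα]
  rw [integral_pos_iff_support_of_nonneg (fun x ↦ rpow_nonneg (hf0 x) α) hfα, hsupp]
  exact (integral_pos_iff_support_of_nonneg hf0 (.of_integral_ne_zero hf.ne')).1 hf

end Holder

section Student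

variable {V : Type*} [NormedAddCommGroup V] [InnerProductSpace ℝ V] [FiniteDimensional ℝ V]
  [MeasurableSpace V] [BorelSpace V]

open Module (finrank)

lemma integrable_one_add_norm_sq_rpow_neg {p : ℝ} (hp : (finrank ℝ V : ℝ) / 2 < p) :
    Integrable (fun v : V ↦ (1 + ‖v‖ ^ 2) ^ (-p)) := by
  have := integrable_rpow_neg_one_add_norm_sq (μ := (volume : Measure V)) (r := 2 * p)
    (by linarith)
  simpa only [neg_div, mul_div_cancel_left₀ p (two_ne_zero' ℝ)] using this

lemma integral_rpow_mul_exp_neg_one_add_norm_sq (p : ℝ) {t : ℝ} (ht : 0 < t) :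
    ∫ v : V, t ^ (p - 1) * exp (-((1 + ‖v‖ ^ 2) * t)) =
      π ^ ((finrank ℝ V : ℝ) / 2) *
        (t ^ (p - (finrank ℝ V : ℝ) / 2 - 1) * exp (-(1 * t))) := by
  have hexp (v : V) : t ^ (p - 1) * exp (-((1 + ‖v‖ ^ 2) * t)) =
      t ^ (p - 1) * exp (-t) * exp (-t * ‖v‖ ^ 2) := by
    rw [mul_assoc, ← exp_add]
    ring_nf
  simp_rw [hexp]
  rw [integral_const_mul, GaussianFourier.integral_rexp_neg_mul_sq_norm ht,
    div_rpow pi_pos.le ht.le, sub_right_comm, rpow_sub ht (p - 1), one_mul]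
  ring

lemma integral_Ioi_rpow_mul_exp_neg_mul {p r : ℝ} (hp : 0 < p) (hr : 0 < r) :
    ∫ t in Set.Ioi 0, t ^ (p - 1) * exp (-(r * t)) = r ^ (-p) * Gamma p := by
  rw [integral_rpow_mul_exp_neg_mul_Ioi hp hr, one_div, inv_rpow hr.le, rpow_neg hr.le]

lemma integrable_rpow_mul_exp_neg_one_add_norm_sq {p : ℝ} (hp : (finrank ℝ V : ℝ) / 2 < p) :
    Integrable (fun z : V × ℝ ↦ z.2 ^ (p - 1) * exp (-((1 + ‖z.1‖ ^ 2) * z.2)))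
      (volume.prod (volume.restrict (Set.Ioi 0))) := by
  have hp0 : 0 < p := lt_of_le_of_lt (by positivity) hp
  have integral_slice (v : V) : ∫ t in Set.Ioi 0, t ^ (p - 1) * exp (-((1 + ‖v‖ ^ 2) * t)) =
      (1 + ‖v‖ ^ 2) ^ (-p) * Gamma p :=
    integral_Ioi_rpow_mul_exp_neg_mul hp0 (by positivity)
  refine (integrable_prod_iff (Measurable.aestronglyMeasurable (by fun_prop))).2 ⟨?_, ?_⟩
  · refine .of_forall fun v ↦ .of_integral_ne_zero ?_
    have := Gamma_pos_of_pos hp0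
    simp only [integral_slice]
    positivity
  · refine ((integrable_one_add_norm_sq_rpow_neg hp).mul_const (Gamma p)).congr
      (.of_forall fun v ↦ ?_)
    simp only [← integral_slice]
    refine setIntegral_congr_fun measurableSet_Ioi fun t (ht : 0 < t) ↦ ?_
    exact (norm_of_nonneg (by positivity)).symm

lemma integral_one_add_norm_sq_rpow_neg {p : ℝ} (hp : (finrank ℝ V : ℝ) / 2 < p) :
    ∫ v : V, (1 + ‖v‖ ^ 2) ^ (-p) =
      π ^ ((finrank ℝ V : ℝ) / 2) * Gamma (p - (finrank ℝ V : ℝ) / 2) / Gamma p := by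
  have hp0 : 0 < p := lt_of_le_of_lt (by positivity) hp
  rw [eq_div_iff (Gamma_pos_of_pos hp0).ne']
  calc (∫ v : V, (1 + ‖v‖ ^ 2) ^ (-p)) * Gamma p
      = ∫ v : V, ∫ t in Set.Ioi 0, t ^ (p - 1) * exp (-((1 + ‖v‖ ^ 2) * t)) := by
        rw [← integral_mul_const]
        congr with v
        rw [integral_Ioi_rpow_mul_exp_neg_mul hp0 (by positivity)]
    _ = ∫ t in Set.Ioi 0, ∫ v : V, t ^ (p - 1) * exp (-((1 + ‖v‖ ^ 2) * t)) :=
        integral_integral_swap (integrable_rpow_mul_exp_neg_one_add_norm_sq hp)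
    _ = ∫ t in Set.Ioi 0, π ^ ((finrank ℝ V : ℝ) / 2) *
          (t ^ (p - (finrank ℝ V : ℝ) / 2 - 1) * exp (-(1 * t))) :=
        setIntegral_congr_fun measurableSet_Ioi fun t ht ↦
          integral_rpow_mul_exp_neg_one_add_norm_sq p ht
    _ = π ^ ((finrank ℝ V : ℝ) / 2) * Gamma (p - (finrank ℝ V : ℝ) / 2) := by
        rw [integral_const_mul, integral_Ioi_rpow_mul_exp_neg_mul (sub_pos.2 hp) one_pos,
          one_rpow, one_mul]

end Student

section QuadraticForm

variable {ι : Type*} [Fintype ι]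

lemma dotProduct_mulVec_mul_eq_sum {R : Type*} [CommSemiring R] (A : Matrix ι ι R) (x : ι → R)
    (y : R) : (x ⬝ᵥ A *ᵥ x) * y = ∑ a, ∑ b, A a b * (x a * x b * y) := by
  simp only [dotProduct, mulVec, Finset.mul_sum, Finset.sum_mul]
  exact Finset.sum_congr rfl fun a _ ↦ Finset.sum_congr rfl fun b _ ↦ by ring

lemma dotProduct_transpose_mul_self_mulVec {κ : Type*} [Fintype κ] (B : Matrix κ ι ℝ)
    (x : ι → ℝ) : x ⬝ᵥ (Bᵀ * B) *ᵥ x = ‖WithLp.toLp 2 (B *ᵥ x)‖ ^ 2 := by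
  rw [EuclideanSpace.real_norm_sq_eq, ← mulVec_mulVec, dotProduct_mulVec, vecMul_transpose]
  simp only [dotProduct, sq]

section SecondMoment

variable {μ : Measure (ι → ℝ)} {f : (ι → ℝ) → ℝ}

lemma integrable_dotProduct_mulVec_mul (hf : ∀ a b, Integrable (fun x ↦ x a * x b * f x) μ)
    (A : Matrix ι ι ℝ) : Integrable (fun x ↦ (x ⬝ᵥ A *ᵥ x) * f x) μ := by
  simp only [dotProduct_mulVec_mul_eq_sum]
  exact integrable_finsetSum _ fun a _ ↦ integrable_finsetSum _ fun b _ ↦ (hf a b).const_mul _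

lemma integral_dotProduct_mulVec_mul {S : Matrix ι ι ℝ}
    (hf : ∀ a b, Integrable (fun x ↦ x a * x b * f x) μ)
    (hS : ∀ a b, ∫ x, x a * x b * f x ∂μ = S a b) (A : Matrix ι ι ℝ) :
    ∫ x, (x ⬝ᵥ A *ᵥ x) * f x ∂μ = (A * S).trace := by
  have hS_symm (a b : ι) : S a b = S b a := by
    simp only [← hS, mul_comm (_ : ℝ) (_ : ℝ)]
  have hint (a b : ι) : Integrable (fun x ↦ A a b * (x a * x b * f x)) μ := (hf a b).const_mul _
  calc ∫ x, (x ⬝ᵥ A *ᵥ x) * f x ∂μ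
      = ∑ a, ∑ b, ∫ x, A a b * (x a * x b * f x) ∂μ := by
        simp only [dotProduct_mulVec_mul_eq_sum]
        rw [integral_finsetSum _ fun a _ ↦ integrable_finsetSum _ fun b _ ↦ hint a b]
        simp only [integral_finsetSum _ fun b _ ↦ hint _ b]
    _ = ∑ a, ∑ b, A a b * S b a := by simp only [integral_const_mul, hS, hS_symm]
    _ = (A * S).trace := rfl

end SecondMoment

variable {A : Matrix ι ι ℝ}

open scoped MatrixOrder ComplexOrder in
lemma exists_eq_transpose_mul_self_of_posSemidef (hA : A.PosSemidef) :
    ∃ B : Matrix ι ι ℝ, A = Bᵀ * B := by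
  classical
  simpa only [star_eq_conjTranspose, conjTranspose_eq_transpose_of_trivial] using
    CStarAlgebra.nonneg_iff_eq_star_mul_self.mp hA.nonneg

lemma map_dotProduct_mulVec_volume [DecidableEq ι] (hA : A.PosDef) :
    Measure.map (fun x : ι → ℝ ↦ x ⬝ᵥ A *ᵥ x) volume =
      ENNReal.ofReal (√A.det)⁻¹ •
        Measure.map (fun v : EuclideanSpace ℝ ι ↦ ‖v‖ ^ 2) volume := by
  obtain ⟨B, rfl⟩ := exists_eq_transpose_mul_self_of_posSemidef hA.posSemidef
  have hdet : (Bᵀ * B).det = B.det * B.det := by rw [det_mul, det_transpose]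
  have hB : B.det ≠ 0 := fun h ↦ hA.det_pos.ne' (by rw [hdet, h, zero_mul])
  have hB_meas : Measurable (toLin' B) := (LinearMap.continuous_of_finiteDimensional _).measurable
  have hcomp : (fun x : ι → ℝ ↦ x ⬝ᵥ (Bᵀ * B) *ᵥ x) =
      (fun v : EuclideanSpace ℝ ι ↦ ‖v‖ ^ 2) ∘ WithLp.toLp 2 ∘ toLin' B :=
    funext (dotProduct_transpose_mul_self_mulVec B)
  rw [hcomp, ← Measure.map_map (by fun_prop) (by fun_prop),
    ← Measure.map_map (by fun_prop) hB_meas, map_matrix_volume_pi_eq_smul_volume_pi hB,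
    Measure.map_smul, (PiLp.volume_preserving_toLp ι).map_eq, Measure.map_smul, hdet,
    sqrt_mul_self_eq_abs, abs_inv]

lemma integrable_one_add_dotProduct_mulVec_rpow_neg (hA : A.PosDef) {p : ℝ}
    (hp : (Fintype.card ι : ℝ) / 2 < p) :
    Integrable (fun x : ι → ℝ ↦ (1 + x ⬝ᵥ A *ᵥ x) ^ (-p)) := by
  classical
  have hq : Measurable (fun x : ι → ℝ ↦ x ⬝ᵥ A *ᵥ x) := by fun_prop
  have hg : Measurable (fun s : ℝ ↦ (1 + s) ^ (-p)) := by fun_prop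
  suffices Integrable (fun s : ℝ ↦ (1 + s) ^ (-p))
      (Measure.map (fun x : ι → ℝ ↦ x ⬝ᵥ A *ᵥ x) volume) from this.comp_measurable hq
  rw [map_dotProduct_mulVec_volume hA]
  refine Integrable.smul_measure ?_ ENNReal.ofReal_ne_top
  rw [integrable_map_measure hg.aestronglyMeasurable (by fun_prop)]
  exact integrable_one_add_norm_sq_rpow_neg (by rwa [finrank_euclideanSpace])

lemma integral_one_add_dotProduct_mulVec_rpow_neg [DecidableEq ι] (hA : A.PosDef) {p : ℝ}
    (hp : (Fintype.card ι : ℝ) / 2 < p) :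
    ∫ x : ι → ℝ, (1 + x ⬝ᵥ A *ᵥ x) ^ (-p) =
      (√A.det)⁻¹ * (π ^ ((Fintype.card ι : ℝ) / 2) *
        Gamma (p - (Fintype.card ι : ℝ) / 2) / Gamma p) := by
  have hq : Measurable (fun x : ι → ℝ ↦ x ⬝ᵥ A *ᵥ x) := by fun_prop
  have hg : Measurable (fun s : ℝ ↦ (1 + s) ^ (-p)) := by fun_prop
  calc ∫ x : ι → ℝ, (1 + x ⬝ᵥ A *ᵥ x) ^ (-p)
      = ∫ s, (1 + s) ^ (-p) ∂(Measure.map (fun x : ι → ℝ ↦ x ⬝ᵥ A *ᵥ x) volume) :=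
        (integral_map hq.aemeasurable hg.aestronglyMeasurable).symm
    _ = (√A.det)⁻¹ * ∫ v : EuclideanSpace ℝ ι, (1 + ‖v‖ ^ 2) ^ (-p) := by
        rw [map_dotProduct_mulVec_volume hA, integral_smul_measure,
          ENNReal.toReal_ofReal (by positivity), smul_eq_mul,
          integral_map (by fun_prop) hg.aestronglyMeasurable]
    _ = _ := by
        rw [← finrank_euclideanSpace (𝕜 := ℝ) (ι := ι)] at hp ⊢
        rw [integral_one_add_norm_sq_rpow_neg hp]

end QuadraticForm

section RenyiEntropy

lemma half_lt_div_one_sub {n α : ℝ} (hn : 0 ≤ n) (hα : n / (n + 2) < α) (hα1 : α < 1) :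
    n / 2 < α / (1 - α) := by
  rw [div_lt_iff₀ (by positivity)] at hα
  rw [div_lt_div_iff₀ two_pos (sub_pos.2 hα1)]
  linarith

variable {ι : Type*} [Fintype ι] {α : ℝ} {f : (ι → ℝ) → ℝ} {A S : Matrix ι ι ℝ}

lemma one_add_dotProduct_mulVec_pos (hA : A.PosSemidef) (x : ι → ℝ) : 0 < 1 + x ⬝ᵥ A *ᵥ x :=
  add_pos_of_pos_of_nonneg one_pos (hA.dotProduct_mulVec_nonneg x)

lemma integrable_one_add_dotProduct_mulVec_mul {μ : Measure (ι → ℝ)} (hf : Integrable f μ)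
    (hmom : ∀ a b, Integrable (fun x ↦ x a * x b * f x) μ) (A : Matrix ι ι ℝ) :
    Integrable (fun x ↦ (1 + x ⬝ᵥ A *ᵥ x) * f x) μ := by
  simp only [add_mul, one_mul]
  exact hf.add (integrable_dotProduct_mulVec_mul hmom A)

lemma integral_one_add_dotProduct_mulVec_mul {μ : Measure (ι → ℝ)} (hf : Integrable f μ)
    (hmom : ∀ a b, Integrable (fun x ↦ x a * x b * f x) μ)
    (hS : ∀ a b, ∫ x, x a * x b * f x ∂μ = S a b) (A : Matrix ι ι ℝ) :
    ∫ x, (1 + x ⬝ᵥ A *ᵥ x) * f x ∂μ = (∫ x, f x ∂μ) + (A * S).trace := by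
  simp only [add_mul, one_mul]
  rw [integral_add hf (integrable_dotProduct_mulVec_mul hmom A),
    integral_dotProduct_mulVec_mul hmom hS]

lemma integrable_rpow_of_integrable_second_moments
    (hα : (Fintype.card ι : ℝ) / (Fintype.card ι + 2) < α) (hα1 : α < 1) (hf0 : ∀ x, 0 ≤ f x)
    (hf : Integrable f)
    (hmom : ∀ a b, Integrable (fun x ↦ x a * x b * f x)) : Integrable (fun x ↦ f x ^ α) := by
  classical
  have hα0 : 0 < α := lt_of_le_of_lt (by positivity) hα
  exact integrable_rpow_of_weight hα0.le hα1 hf0 (one_add_dotProduct_mulVec_pos .one)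
    (integrable_one_add_dotProduct_mulVec_mul hf hmom 1)
    (integrable_one_add_dotProduct_mulVec_rpow_neg .one
      (half_lt_div_one_sub (Nat.cast_nonneg _) hα hα1))

variable [DecidableEq ι]

lemma trace_smul_inv_mul_self (hS : IsUnit S.det) (c : ℝ) :
    (c • S⁻¹ * S).trace = c * Fintype.card ι := by
  rw [smul_mul, nonsing_inv_mul _ hS, trace_smul, trace_one, smul_eq_mul]

lemma log_det_smul_inv {c : ℝ} (hc : c ≠ 0) (hS : S.det ≠ 0) :
    log (c • S⁻¹).det = Fintype.card ι * log c - log S.det := by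
  rw [det_smul, det_nonsing_inv, Ring.inverse_eq_inv', log_mul (pow_ne_zero _ hc) (inv_ne_zero hS),
    log_pow, log_inv, sub_eq_add_neg]

lemma integral_rpow_le_of_posDef
    (hα : (Fintype.card ι : ℝ) / (Fintype.card ι + 2) < α) (hα1 : α < 1) (hf0 : ∀ x, 0 ≤ f x)
    (hf : Integrable f)
    (hmom : ∀ a b, Integrable (fun x ↦ x a * x b * f x))
    (hS : ∀ a b, ∫ x, x a * x b * f x = S a b) (hA : A.PosDef) :
    ∫ x, f x ^ α ≤ ((∫ x, f x) + (A * S).trace) ^ α *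
      ((√A.det)⁻¹ * (π ^ ((Fintype.card ι : ℝ) / 2) *
        Gamma (α / (1 - α) - (Fintype.card ι : ℝ) / 2) / Gamma (α / (1 - α)))) ^ (1 - α) := by
  have hα0 : 0 < α := lt_of_le_of_lt (by positivity) hα
  have hp := half_lt_div_one_sub (Nat.cast_nonneg _) hα hα1
  rw [← integral_one_add_dotProduct_mulVec_mul hf hmom hS,
    ← integral_one_add_dotProduct_mulVec_rpow_neg hA hp]
  exact integral_rpow_le_of_weight hα0.le hα1 hf0 (one_add_dotProduct_mulVec_pos hA.posSemidef)
    (integrable_one_add_dotProduct_mulVec_mul hf hmom A)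
    (integrable_one_add_dotProduct_mulVec_rpow_neg hA hp)

lemma renyi_entropy_le_of_posDef
    (hα : (Fintype.card ι : ℝ) / (Fintype.card ι + 2) < α) (hα1 : α < 1) (hf0 : ∀ x, 0 ≤ f x)
    (hf1 : ∫ x, f x = 1)
    (hmom : ∀ a b, Integrable (fun x ↦ x a * x b * f x))
    (hS : ∀ a b, ∫ x, x a * x b * f x = S a b) (hA : A.PosDef) :
    1 / (1 - α) * log (∫ x, f x ^ α) ≤
      α / (1 - α) * log (1 + (A * S).trace) - 1 / 2 * log A.det
        + Fintype.card ι / 2 * log π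
        - log (Gamma (α / (1 - α)) / Gamma (α / (1 - α) - Fintype.card ι / 2)) := by
  have hα0 : 0 < α := lt_of_le_of_lt (by positivity) hα
  have hα1' : 0 < 1 - α := sub_pos.2 hα1
  have hf := integrable_of_integral_eq_one hf1
  have htrace : 0 ≤ (A * S).trace := by
    rw [← integral_dotProduct_mulVec_mul hmom hS]
    exact integral_nonneg fun x ↦
      mul_nonneg (hA.posSemidef.dotProduct_mulVec_nonneg x) (hf0 x)
  have hdet := hA.det_pos
  have hΓ : 0 < Gamma (α / (1 - α)) := Gamma_pos_of_pos (by positivity)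
  have hΓ' : 0 < Gamma (α / (1 - α) - Fintype.card ι / 2) :=
    Gamma_pos_of_pos (sub_pos.2 (half_lt_div_one_sub (Nat.cast_nonneg _) hα hα1))
  have hlog := log_le_log
    (integral_rpow_pos hα0.ne' hf0 (hf1 ▸ one_pos)
      (integrable_rpow_of_integrable_second_moments hα hα1 hf0 hf hmom))
    (integral_rpow_le_of_posDef hα hα1 hf0 hf hmom hS hA)
  rw [hf1, log_mul (by positivity) (by positivity), log_rpow (by positivity),
    log_rpow (by positivity), log_mul (by positivity) (by positivity), log_inv,
    log_sqrt hdet.le, log_div (by positivity) hΓ.ne', log_mul (by positivity) hΓ'.ne',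
    log_rpow pi_pos] at hlog
  rw [one_div, inv_mul_le_iff₀ hα1', log_div hΓ.ne' hΓ'.ne']
  refine hlog.trans_eq ?_
  field_simp
  ring

theorem renyi_entropy_upper_bound_of_lt_one_general
    (hα : (Fintype.card ι : ℝ) / (Fintype.card ι + 2) < α) (hα1 : α < 1) (hf0 : ∀ x, 0 ≤ f x)
    (hf1 : ∫ x, f x = 1)
    (hmom : ∀ a b, Integrable (fun x ↦ x a * x b * f x))
    (hmom_eq : ∀ a b, ∫ x, x a * x b * f x = S a b) (hS : S.PosDef) :
    Integrable (fun x ↦ f x ^ α) ∧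
      1 / (1 - α) * log (∫ x, f x ^ α) ≤
        (Fintype.card ι : ℝ) / 2 *
            log (π * (α * ((Fintype.card ι : ℝ) + 2) - Fintype.card ι) / (1 - α))
          - α / (1 - α) * log ((α * ((Fintype.card ι : ℝ) + 2) - Fintype.card ι) / (2 * α))
          - log (Gamma (α / (1 - α)) /
              Gamma ((α * ((Fintype.card ι : ℝ) + 2) - Fintype.card ι) / (2 * (1 - α))))
          + 1 / 2 * log S.det := by
  refine ⟨integrable_rpow_of_integrable_second_moments hα hα1 hf0
    (integrable_of_integral_eq_one hf1) hmom, ?_⟩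
  have hα1' : 0 < 1 - α := sub_pos.2 hα1
  have hdet : S.det ≠ 0 := hS.det_pos.ne'
  set n : ℝ := (Fintype.card ι : ℝ) with hn
  obtain ⟨m, hm⟩ : ∃ m, m = α * (n + 2) - n := ⟨_, rfl⟩
  have hm0 : 0 < m := hm ▸ sub_pos.2 ((div_lt_iff₀ (by positivity)).1 hα)
  have hc0 : 0 < (1 - α) / m := by positivity
  have hweight : 1 + (1 - α) / m * n = (m / (2 * α))⁻¹ := by
    field_simp
    rw [hm]
    ring
  have hlog : log (π * m / (1 - α)) = log π - log ((1 - α) / m) := by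
    rw [← log_div pi_ne_zero hc0.ne', div_div_eq_mul_div]
  have hΓarg : α / (1 - α) - n / 2 = m / (2 * (1 - α)) := by
    rw [hm]
    field_simp
    ring
  have hbound := renyi_entropy_le_of_posDef hα hα1 hf0 hf1 hmom hmom_eq (hS.inv.smul hc0)
  rw [trace_smul_inv_mul_self hdet.isUnit, log_det_smul_inv hc0.ne' hdet, ← hn, hweight, log_inv,
    hΓarg] at hbound
  rw [← hm, hlog]
  linarith

end RenyiEntropy

/-- **Upper bound for the Rényi entropy of order `d/(d+2) < α < 1` in terms of the covariance
matrix.** If `f` is a probability density on `ℝ^d` with zero mean, positive definite covariance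
matrix `S`, and `∫ f^α < ∞`, then `(1/(1−α))·ln(∫ f^α) ≤ C_d(α) + (1/2)·ln(det S)` where
`C_d(α) = (d/2)·ln(π(α(d+2)−d)/(1−α)) − (α/(1−α))·ln((α(d+2)−d)/(2α))
          − ln(Γ(α/(1−α)) / Γ((α(d+2)−d)/(2(1−α))))`. -/
theorem renyi_entropy_upper_bound_of_lt_one
    (d : ℕ) (α : ℝ) (hαl : (d : ℝ) / ((d : ℝ) + 2) < α) (hαu : α < 1)
    (f : (Fin d → ℝ) → ℝ) (S : Matrix (Fin d) (Fin d) ℝ)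
    (hmeas : Measurable f) (hf0 : ∀ x, 0 ≤ f x) (hf1 : ∫ x, f x = 1)
    (hmean : ∀ a : Fin d, ∫ x, x a * f x = 0)
    (hcov_int : ∀ a b : Fin d, Integrable (fun x => x a * x b * f x))
    (hcov : ∀ a b : Fin d, ∫ x, x a * x b * f x = S a b)
    (hS : S.PosDef)
    (hfα : Integrable (fun x => f x ^ α)) :
    (1 / (1 - α)) * Real.log (∫ x, f x ^ α) ≤
      ((d : ℝ) / 2) * Real.log (π * (α * ((d : ℝ) + 2) - d) / (1 - α))
        - (α / (1 - α)) * Real.log ((α * ((d : ℝ) + 2) - d) / (2 * α))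
        - Real.log (Real.Gamma (α / (1 - α)) /
            Real.Gamma ((α * ((d : ℝ) + 2) - d) / (2 * (1 - α))))
        + (1 / 2) * Real.log S.det := by
  simpa only [Fintype.card_fin] using
    (renyi_entropy_upper_bound_of_lt_one_general (by rwa [Fintype.card_fin]) hαu hf0 hf1 hcov_int
      hcov hS).2
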